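/- arXiv:0710.5272 — 2 statements merged into one kernel-verified Lean document; each statement's English description precedes it below -/
import Mathlib

section
/- (Diagonalization of the anti-reflective algebra.) Let n1, n2 ≥ 3 and let h = (h_{i1,i2}) be a strongly symmetric two-dimensional PSF mask with q1 ≤ n1−3 and q2 ≤ n2−3. Let A_n ∈ ℝ^{n1 n2 × n1 n2} be the two-level anti-reflective matrix associated with h. Then A_n is diagonalized by T_n = T_{n1}⊗T_{n2}: the matrix (T̃_{n1}⊗T̃_{n2}) A_n (T_{n1}⊗T_{n2}) is diagonal, where T̃_{n1}⊗T̃_{n2} = (T_{n1}⊗T_{n2})^{−1}. -/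
open Real Matrix Kronecker

/-- Entry `(Q_m)_{s,t} = √(2/(m+1)) · sin(s t π/(m+1))` of the DST-I matrix,
for 1-based indices `s, t`. -/
noncomputable def dstIent (m s t : ℕ) : ℝ :=
  Real.sqrt (2 / ((m : ℝ) + 1)) *
    Real.sin ((s : ℝ) * (t : ℝ) * Real.pi / ((m : ℝ) + 1))

/-- Entry `p_j = 1 − j/(m−1)` of the vector `p ∈ ℝ^{m−2}` (1-based `j`). -/
noncomputable def pv (m j : ℕ) : ℝ := 1 - (j : ℝ) / ((m : ℝ) - 1)

/-- The normalizing factor `α_m = √(1 + ‖p‖₂²)`. -/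
noncomputable def alphaAR (m : ℕ) : ℝ :=
  Real.sqrt (1 + ∑ j ∈ Finset.Icc 1 (m - 2), (pv m j) ^ 2)

/-- The anti-reflective transform `T_m`. -/
noncomputable def arT (m : ℕ) : Matrix (Fin m) (Fin m) ℝ := fun s t =>
  if t.val = 0 then
    (if s.val = 0 then (alphaAR m)⁻¹
     else if s.val = m - 1 then 0
     else (alphaAR m)⁻¹ * pv m s.val)
  else if t.val = m - 1 then
    (if s.val = 0 then 0
     else if s.val = m - 1 then (alphaAR m)⁻¹
     else (alphaAR m)⁻¹ * pv m (m - 1 - s.val))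
  else
    (if s.val = 0 ∨ s.val = m - 1 then 0 else dstIent (m - 2) s.val t.val)

/-- The inverse anti-reflective transform `T̃_m = T_m⁻¹`. -/
noncomputable def arTtil (m : ℕ) : Matrix (Fin m) (Fin m) ℝ := fun s t =>
  if t.val = 0 then
    (if s.val = 0 then alphaAR m
     else if s.val = m - 1 then 0
     else -∑ j ∈ Finset.Icc 1 (m - 2), dstIent (m - 2) s.val j * pv m j)
  else if t.val = m - 1 then
    (if s.val = 0 then 0
     else if s.val = m - 1 then alphaAR m
     else -∑ j ∈ Finset.Icc 1 (m - 2), dstIent (m - 2) s.val j * pv m (m - 1 - j))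
  else
    (if s.val = 0 ∨ s.val = m - 1 then 0 else dstIent (m - 2) s.val t.val)

/-- First-column entries of the anti-reflective structure (over any ring, so that the
same rule can be applied at the block level), at 1-based row index `s`:
`g_{s−1} + 2∑_{t=s}^{q} g_t` for `1 ≤ s ≤ q+1` and `0` otherwise. -/
def arColR {R : Type*} [Ring R] (g : ℕ → R) (q s : ℕ) : R :=
  if 1 ≤ s ∧ s ≤ q + 1 then g (s - 1) + 2 * ∑ t ∈ Finset.Icc s q, g t else 0

/-- Generic `(s,t)` entry (0-based) of the `m×m` anti-reflective structure built from
the symmetric mask `g`: first column `arColR`, last column its flip, rows `1` and `m`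
vanishing outside the corners, and central `(m−2)×(m−2)` part equal to the `τ` matrix
with entries `g_{|s−t|} − g_{s+t} − g_{2(m−1)−s−t}`. -/
def arEnt {R : Type*} [Ring R] (g : ℕ → R) (q m s t : ℕ) : R :=
  if t = 0 then arColR g q (s + 1)
  else if t = m - 1 then arColR g q (m - s)
  else if s = 0 ∨ s = m - 1 then 0
  else g ((s : ℤ) - (t : ℤ)).natAbs - g (s + t) - g (2 * (m - 1) - s - t)

/-- The 1D anti-reflective blurring matrix `AR_m(g)`. -/
noncomputable def arMat (g : ℕ → ℝ) (q m : ℕ) : Matrix (Fin m) (Fin m) ℝ := fun s t =>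
  arEnt g q m s.val t.val

/-- The two-level anti-reflective blurring matrix `A_n` of the 2D mask `h`: the
`n1×n1` block matrix (with `n2×n2` blocks) obtained by applying the anti-reflective
rule at the block level to the blocks `D_k = AR_{n2}(h_{k,·})`. -/
noncomputable def arMat2 (h : ℕ → ℕ → ℝ) (q1 q2 n1 n2 : ℕ) :
    Matrix (Fin n1 × Fin n2) (Fin n1 × Fin n2) ℝ := fun i j =>
  (arEnt (R := Matrix (Fin n2) (Fin n2) ℝ) (fun k => arMat (h k) q2 n2) q1 n1
    i.1.val j.1.val) i.2 j.2

lemma cos_sum_aux (N : ℕ) (x : ℝ) :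
    2 * sin (x / 2) * ∑ j ∈ Finset.range N, cos (j * x) = sin (N * x - x / 2) + sin (x / 2) := by
  induction N with
  | zero => simp [sin_neg]
  | succ n ih =>
    rw [Finset.sum_range_succ, mul_add, ih]
    have e1 : ((n + 1 : ℕ) : ℝ) * x - x / 2 = n * x + x / 2 := by push_cast; ring
    rw [e1, sin_add, sin_sub]
    ring

lemma cos_sum_val (N : ℕ) (d : ℤ) (hN : 0 < N) (hd : d ≠ 0) (h1 : -(2 * N : ℤ) < d)
    (h2 : d < 2 * N) :
    ∑ j ∈ Finset.range N, cos (j * (d * π / N)) = (1 - cos (d * π)) / 2 := by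
  have hN' : (N : ℝ) ≠ 0 := by positivity
  have hs : sin (d * π / N / 2) ≠ 0 := by
    intro h0
    obtain ⟨k, hk⟩ := Real.sin_eq_zero_iff.mp h0
    have : (k : ℝ) * (2 * N) = d := by
      field_simp at hk
      have hp := Real.pi_ne_zero
      linarith
    have hz : k * (2 * N) = d := by exact_mod_cast this
    have hNz : (0 : ℤ) < N := by exact_mod_cast hN
    rcases lt_trichotomy k 0 with hk0 | hk0 | hk0
    · nlinarith
    · subst hk0; simp at hz; exact hd hz.symm
    · nlinarith
  have := cos_sum_aux N (d * π / N)
  have e : (N : ℝ) * (d * π / N) = d * π := by field_simp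
  rw [e, sin_sub, Real.sin_int_mul_pi] at this
  apply mul_left_cancel₀ (mul_ne_zero two_ne_zero hs)
  rw [this]; ring

lemma sum_Icc_range (n : ℕ) (F : ℕ → ℝ) (h0 : F 0 = 0) :
    ∑ j ∈ Finset.Icc 1 n, F j = ∑ j ∈ Finset.range (n + 1), F j := by
  rw [Finset.sum_range_succ', h0, add_zero, Finset.range_eq_Ico, Finset.sum_Ico_add' F 0 n 1]
  rfl

lemma dst_orth (n s t : ℕ) (hs : 1 ≤ s) (hs' : s ≤ n) (ht : 1 ≤ t) (ht' : t ≤ n) :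
    ∑ j ∈ Finset.Icc 1 n, dstIent n s j * dstIent n j t = if s = t then 1 else 0 := by
  rw [sum_Icc_range n _ (by simp [dstIent])]
  have hc : ∀ j : ℕ, dstIent n s j * dstIent n j t =
      (1 / ((n + 1 : ℕ) : ℝ)) * (cos (j * (((s : ℤ) - t : ℤ) * π / (n + 1 : ℕ)))
        - cos (j * (((s : ℤ) + t : ℤ) * π / (n + 1 : ℕ)))) := by
    intro j
    have hsq : √(2 / ((n : ℝ) + 1)) * √(2 / ((n : ℝ) + 1)) = 2 / ((n : ℝ) + 1) :=
      Real.mul_self_sqrt (by positivity)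
    have e1 : (j : ℝ) * ((((s : ℤ) - t : ℤ) : ℝ) * π / (n + 1 : ℕ))
      = (s : ℝ) * j * π / (n + 1) - (j : ℝ) * t * π / (n + 1) := by push_cast; ring
    have e2 : (j : ℝ) * ((((s : ℤ) + t : ℤ) : ℝ) * π / (n + 1 : ℕ))
      = (s : ℝ) * j * π / (n + 1) + (j : ℝ) * t * π / (n + 1) := by push_cast; ring
    rw [e1, e2, cos_sub, cos_add]
    unfold dstIent
    push_cast
    calc _ = (√(2 / ((n : ℝ) + 1)) * √(2 / ((n : ℝ) + 1))) *
          (sin ((s : ℝ) * j * π / (n + 1)) * sin ((j : ℝ) * t * π / (n + 1))) := by ring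
      _ = _ := by rw [hsq]; ring
  simp_rw [hc]
  rw [← Finset.mul_sum, Finset.sum_sub_distrib]
  rw [cos_sum_val (n + 1) ((s : ℤ) + t) (by omega) (by omega) (by push_cast; omega)
    (by push_cast; omega)]
  split_ifs with hst
  · subst hst
    have : cos ((((s : ℤ) + s : ℤ) : ℝ) * π) = 1 := by
      have := Real.cos_nat_mul_two_pi s
      rw [← this]; congr 1; push_cast; ring
    rw [this]
    simp
    have : (n : ℝ) + 1 ≠ 0 := by positivity
    field_simp
  · rw [cos_sum_val (n + 1) ((s : ℤ) - t) (by omega) (by omega) (by push_cast; omega)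
      (by push_cast; omega)]
    have : cos ((((s : ℤ) + t : ℤ) : ℝ) * π) = cos ((((s : ℤ) - t : ℤ) : ℝ) * π) := by
      have := Real.cos_add_nat_mul_two_pi ((((s : ℤ) - t : ℤ) : ℝ) * π) t
      rw [← this]; congr 1; push_cast; ring
    rw [this]; simp

lemma sum_fin_split (M : ℕ) (F : ℕ → ℝ) :
    ∑ t : Fin (M + 3), F t.val = F 0 + F (M + 2) + ∑ t ∈ Finset.Icc 1 (M + 1), F t := by
  rw [Fin.sum_univ_eq_sum_range F (M + 3), Finset.sum_range_succ, Finset.sum_range_succ']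
  have : ∑ t ∈ Finset.Icc 1 (M + 1), F t = ∑ k ∈ Finset.range (M + 1), F (k + 1) := by
    rw [Finset.range_eq_Ico, Finset.sum_Ico_add' F 0 (M + 1) 1]
    rfl
  rw [this]; ring

/-- `arT` with natural indices. -/
noncomputable def arTn (m s t : ℕ) : ℝ :=
  if t = 0 then
    (if s = 0 then (alphaAR m)⁻¹
     else if s = m - 1 then 0
     else (alphaAR m)⁻¹ * pv m s)
  else if t = m - 1 then
    (if s = 0 then 0
     else if s = m - 1 then (alphaAR m)⁻¹
     else (alphaAR m)⁻¹ * pv m (m - 1 - s))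
  else
    (if s = 0 ∨ s = m - 1 then 0 else dstIent (m - 2) s t)

/-- `arTtil` with natural indices. -/
noncomputable def arTtiln (m s t : ℕ) : ℝ :=
  if t = 0 then
    (if s = 0 then alphaAR m
     else if s = m - 1 then 0
     else -∑ j ∈ Finset.Icc 1 (m - 2), dstIent (m - 2) s j * pv m j)
  else if t = m - 1 then
    (if s = 0 then 0
     else if s = m - 1 then alphaAR m
     else -∑ j ∈ Finset.Icc 1 (m - 2), dstIent (m - 2) s j * pv m (m - 1 - j))
  else
    (if s = 0 ∨ s = m - 1 then 0 else dstIent (m - 2) s t)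

lemma alphaAR_ne (m : ℕ) : alphaAR m ≠ 0 := by
  have : 0 ≤ ∑ j ∈ Finset.Icc 1 (m - 2), (pv m j) ^ 2 := Finset.sum_nonneg fun _ _ => sq_nonneg _
  exact (Real.sqrt_pos.mpr (by linarith)).ne'

lemma arTtil_mul_arT (M : ℕ) : arTtil (M + 3) * arT (M + 3) = 1 := by
  ext s t
  rw [Matrix.mul_apply]
  change ∑ k : Fin (M + 3), arTtiln (M + 3) s.val k.val * arTn (M + 3) k.val t.val = _
  rw [sum_fin_split M (fun k => arTtiln (M + 3) s.val k * arTn (M + 3) k t.val), Matrix.one_apply]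
  simp only [Fin.ext_iff]
  obtain ⟨s, hs⟩ := s
  obtain ⟨t, ht⟩ := t
  simp only
  have ha := alphaAR_ne (M + 3)
  have hmid : ∀ F G : ℕ → ℝ, (∀ k, 1 ≤ k → k ≤ M + 1 → F k = G k) →
      ∑ k ∈ Finset.Icc 1 (M + 1), F k = ∑ k ∈ Finset.Icc 1 (M + 1), G k := by
    intro F G hFG
    refine Finset.sum_congr rfl fun k hk => ?_
    rw [Finset.mem_Icc] at hk
    exact hFG k hk.1 hk.2
  have hM1 : M + 3 - 1 = M + 2 := by omega
  have hM2 : M + 3 - 2 = M + 1 := by omega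
  by_cases hs0 : s = 0 ∨ s = M + 2
  · rw [hmid _ (fun _ => 0) (fun k h1 h2 => by
      have e1 : k ≠ 0 := by omega
      have e2 : k ≠ M + 2 := by omega
      simp [arTtiln, hM1, hs0, e1, e2])]
    rcases hs0 with rfl | rfl
    · rcases eq_or_ne t 0 with rfl | h1
      · simp [arTtiln, arTn, ha]
      · simp [arTtiln, arTn, h1, h1.symm]
    · rcases eq_or_ne t 0 with rfl | h1
      · simp [arTtiln, arTn]
      · rcases eq_or_ne t (M + 2) with rfl | h2
        · simp [arTtiln, arTn, ha]
        · simp [arTtiln, arTn, h1, h2, h2.symm]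
  · push Not at hs0
    obtain ⟨hs1, hs2⟩ := hs0
    rcases eq_or_ne t 0 with rfl | h1
    · rw [hmid _ (fun k => dstIent (M + 1) s k * pv (M + 3) k * (alphaAR (M + 3))⁻¹)
        (fun k h1 h2 => by
        have e1 : k ≠ 0 := by omega
        have e2 : k ≠ M + 2 := by omega
        simp [arTtiln, arTn, hM1, hM2, hs1, hs2, e1, e2]; ring)]
      rw [← Finset.sum_mul]
      simp [arTtiln, arTn, hM1, hM2, hs1, hs2]
    · rcases eq_or_ne t (M + 2) with rfl | h2
      · rw [hmid _ (fun k => dstIent (M + 1) s k * pv (M + 3) (M + 2 - k) * (alphaAR (M + 3))⁻¹)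
          (fun k h1 h2 => by
          have e1 : k ≠ 0 := by omega
          have e2 : k ≠ M + 2 := by omega
          simp [arTtiln, arTn, hM1, hM2, hs1, hs2, e1, e2]; ring)]
        rw [← Finset.sum_mul]
        simp [arTtiln, arTn, hM1, hM2, hs1, hs2]
      · rw [hmid _ (fun k => dstIent (M + 1) s k * dstIent (M + 1) k t)
          (fun k h1 h2 => by
          have e1 : k ≠ 0 := by omega
          have e2 : k ≠ M + 2 := by omega
          simp [arTtiln, arTn, *])]
        rw [dst_orth (M + 1) s t (by omega) (by omega) (by omega) (by omega)]
        simp [arTtiln, arTn, hM1, hM2, hs1, hs2, h1, h2]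

/-- The eigenvalues. -/
noncomputable def lamAR (g : ℕ → ℝ) (q N j : ℕ) : ℝ :=
  g 0 + ∑ k ∈ Finset.Icc 1 q, g k * (2 * cos (k * (if j = 0 ∨ j = N then 0 else j * π / N)))

lemma arEnt_map {R S : Type*} [Ring R] [Ring S] (φ : R →+ S) (g : ℕ → R) (q m s t : ℕ) :
    φ (arEnt g q m s t) = arEnt (fun k => φ (g k)) q m s t := by
  unfold arEnt arColR
  split_ifs <;> simp [two_mul, map_sum]

/-- single-mask action -/
lemma arEnt_single (M q k s : ℕ) (hq : q ≤ M) (hk : k ≤ q) (hs : s ≤ M + 2) (f : ℤ → ℝ)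
    (h0 : ∀ x, f (-x) = 2 * f 0 - f x)
    (hN : ∀ x, f (2 * (M + 2) - x) = 2 * f (M + 2) - f x) :
    ∑ t : Fin (M + 3), arEnt (fun i => if i = k then (1 : ℝ) else 0) q (M + 3) s t.val * f t.val =
      if k = 0 then f s else f (s + k) + f (s - k) := by
  rw [sum_fin_split M (fun t => arEnt (fun i => if i = k then (1 : ℝ) else 0) q (M + 3) s t * f t)]
  have hM1 : M + 3 - 1 = M + 2 := by omega
  have hA : arEnt (fun i => if i = k then (1 : ℝ) else 0) q (M + 3) s 0 =
      if s = k then 1 else if s < k then 2 else 0 := by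
    simp only [arEnt, arColR, if_true]
    rw [Finset.sum_ite_eq']
    simp only [Finset.mem_Icc]
    split_ifs <;> first | omega | norm_num
  have hB : arEnt (fun i => if i = k then (1 : ℝ) else 0) q (M + 3) s (M + 2) =
      if M + 2 - s = k then 1 else if M + 2 - s < k then 2 else 0 := by
    simp only [arEnt, arColR, hM1, if_neg (show ¬ (M + 2 = 0) by omega), if_true]
    rw [Finset.sum_ite_eq']
    simp only [Finset.mem_Icc]
    split_ifs <;> first | omega | norm_num
  rw [hA, hB]
  by_cases hs0 : s = 0 ∨ s = M + 2
  · rw [Finset.sum_eq_zero (fun t ht => by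
      rw [Finset.mem_Icc] at ht
      have e1 : t ≠ 0 := by omega
      have e2 : t ≠ M + 2 := by omega
      simp [arEnt, hM1, hs0, e1, e2])]
    rcases hs0 with rfl | rfl
    · have := h0 k
      have e2 : ¬ (M + 2 < k) := by omega
      have e1 : ¬ (M + 2 = k) := by omega
      rcases Nat.eq_zero_or_pos k with rfl | hkp
      · simp
      · simp [e1, e2, hkp, hkp.ne', hkp.ne, this]
    · have := hN (M + 2 + k)
      have e2 : ¬ (M + 2 < k) := by omega
      have e1 : ¬ (M + 2 = k) := by omega
      rw [show (2 * ((M : ℤ) + 2) - (M + 2 + k)) = M + 2 - k by ring] at this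
      rcases Nat.eq_zero_or_pos k with rfl | hkp
      · simp
      · simp [e1, e2, hkp, hkp.ne', hkp.ne, this]
  · push Not at hs0
    obtain ⟨hs1, hs2⟩ := hs0
    rcases Nat.eq_zero_or_pos k with rfl | hkp
    · rw [Finset.sum_congr rfl (g := fun t => if s = t then f t else 0) (fun t ht => by
        rw [Finset.mem_Icc] at ht
        have e1 : t ≠ 0 := by omega
        have e2 : t ≠ M + 2 := by omega
        have e3 : ¬ (2 * (M + 2) - s - t = 0) := by omega
        have e4 : ((s : ℤ) - t = 0) ↔ s = t := by omega
        simp [arEnt, hM1, hs1, hs2, e1, e2, e3, e4])]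
      rw [Finset.sum_ite_eq]
      have e5 : ¬ (M + 2 - s = 0) := by omega
      have e6 : s ∈ Finset.Icc 1 (M + 1) := by rw [Finset.mem_Icc]; omega
      simp [hs1, e5, e6]
    · have hsum : ∀ t ∈ Finset.Icc 1 (M + 1),
        arEnt (fun i => if i = k then (1 : ℝ) else 0) q (M + 3) s t * f t =
        (if s + k = t then f t else 0) + (if s - k = t then f t else 0)
          - (if k - s = t then f t else 0)
          - (if 2 * (M + 2) - s - k = t then f t else 0) := by
        intro t ht
        rw [Finset.mem_Icc] at ht
        have e1 : t ≠ 0 := by omega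
        have e2 : t ≠ M + 2 := by omega
        simp only [arEnt, hM1, hs1, hs2, e1, e2, if_false, false_or]
        split_ifs <;> first | omega | ring
      rw [Finset.sum_congr rfl hsum, Finset.sum_sub_distrib, Finset.sum_sub_distrib,
        Finset.sum_add_distrib]
      simp only [Finset.sum_ite_eq, Finset.mem_Icc]
      rw [if_neg hkp.ne']
      have hL : (if s = k then 1 else if s < k then 2 else 0) * f ((0 : ℕ) : ℤ)
          + (if 1 ≤ s - k ∧ s - k ≤ M + 1 then f ((s - k : ℕ) : ℤ) else 0)
          - (if 1 ≤ k - s ∧ k - s ≤ M + 1 then f ((k - s : ℕ) : ℤ) else 0) = f (s - k) := by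
        rcases lt_trichotomy s k with h | h | h
        · have := h0 (k - s)
          rw [show -((k : ℤ) - s) = s - k by ring] at this
          rw [if_neg h.ne, if_pos h, if_neg (by omega), if_pos (by omega), this,
            Nat.cast_sub h.le]
          simp
        · subst h; simp
        · rw [if_neg h.ne', if_neg (by omega), if_pos (by omega), if_neg (by omega),
            Nat.cast_sub h.le]
          simp
      have hR : (if M + 2 - s = k then 1 else if M + 2 - s < k then 2 else 0)
            * f ((M + 2 : ℕ) : ℤ)
          + (if 1 ≤ s + k ∧ s + k ≤ M + 1 then f ((s + k : ℕ) : ℤ) else 0)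
          - (if 1 ≤ 2 * (M + 2) - s - k ∧ 2 * (M + 2) - s - k ≤ M + 1 then
              f ((2 * (M + 2) - s - k : ℕ) : ℤ) else 0) = f (s + k) := by
        rcases lt_trichotomy (M + 2) (s + k) with h | h | h
        · have := hN (2 * (M + 2) - s - k)
          rw [show (2 * ((M : ℤ) + 2) - (2 * (M + 2) - s - k)) = s + k by ring] at this
          rw [if_neg (by omega), if_pos (by omega), if_neg (by omega), if_pos (by omega), this,
            show ((2 * (M + 2) - s - k : ℕ) : ℤ) = 2 * (M + 2) - s - k by omega]
          simp
        · rw [if_pos (by omega), if_neg (by omega), if_neg (by omega), h]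
          simp
        · rw [if_neg (by omega), if_neg (by omega), if_pos (by omega), if_neg (by omega)]
          simp
      linarith

lemma arEnt_expand (g : ℕ → ℝ) (q M s t : ℕ) (hg : ∀ k, q < k → g k = 0) :
    arEnt g q (M + 3) s t = ∑ k ∈ Finset.range (q + 1),
      g k * arEnt (fun i => if i = k then (1 : ℝ) else 0) q (M + 3) s t := by
  have hgk : ∀ i, g i = ∑ k ∈ Finset.range (q + 1), g k * (if i = k then (1 : ℝ) else 0) := by
    intro i
    simp only [mul_ite, mul_one, mul_zero, Finset.sum_ite_eq, Finset.mem_range]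
    split_ifs with h
    · rfl
    · exact hg i (by omega)
  have key : ∀ i, g i = g i := fun _ => rfl
  unfold arEnt arColR
  split_ifs
  · simp only [mul_add, Finset.sum_add_distrib]
    rw [← hgk]
    congr 1
    rw [Finset.sum_congr rfl (fun i _ => hgk i), Finset.sum_comm, Finset.mul_sum]
    refine Finset.sum_congr rfl fun k _ => ?_
    rw [← Finset.mul_sum]; ring
  · simp
  · simp only [mul_add, Finset.sum_add_distrib]
    rw [← hgk]
    congr 1
    rw [Finset.sum_congr rfl (fun i _ => hgk i), Finset.sum_comm, Finset.mul_sum]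
    refine Finset.sum_congr rfl fun k _ => ?_
    rw [← Finset.mul_sum]; ring
  · simp
  · simp
  · simp only [mul_sub, Finset.sum_sub_distrib]
    rw [← hgk, ← hgk, ← hgk]

lemma arEnt_action (M q s : ℕ) (hq : q ≤ M) (hs : s ≤ M + 2) (g : ℕ → ℝ)
    (hg : ∀ k, q < k → g k = 0) (f : ℤ → ℝ) (θ : ℝ)
    (h0 : ∀ x, f (-x) = 2 * f 0 - f x)
    (hN : ∀ x, f (2 * (M + 2) - x) = 2 * f (M + 2) - f x)
    (hθ : ∀ x : ℤ, ∀ k : ℕ, f (x + k) + f (x - k) = 2 * cos (k * θ) * f x) :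
    ∑ t : Fin (M + 3), arEnt g q (M + 3) s t.val * f t.val =
      f s * (g 0 + ∑ k ∈ Finset.Icc 1 q, g k * (2 * cos (k * θ))) := by
  simp_rw [arEnt_expand g q M s _ hg, Finset.sum_mul]
  rw [Finset.sum_comm]
  simp_rw [mul_assoc, ← Finset.mul_sum]
  rw [Finset.sum_congr rfl (fun k hk => by
    rw [arEnt_single M q k s hq (by rw [Finset.mem_range] at hk; omega) hs f h0 hN])]
  rw [Finset.sum_range_succ']
  have : ∑ k ∈ Finset.Icc 1 q, g k * (2 * cos (k * θ)) =
      ∑ k ∈ Finset.range q, g (k + 1) * (2 * cos ((k + 1 : ℕ) * θ)) := by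
    rw [Finset.range_eq_Ico, Finset.sum_Ico_add' (fun k : ℕ => g k * (2 * cos (k * θ))) 0 q 1]
    rfl
  rw [this, mul_add, Finset.mul_sum, add_comm]
  congr 1
  · simp [mul_comm]
  · refine Finset.sum_congr rfl fun k _ => ?_
    rw [if_neg (by omega), hθ]; ring

lemma arEnt_eig (M q s j : ℕ) (hq : q ≤ M) (hs : s ≤ M + 2) (hj : j ≤ M + 2) (g : ℕ → ℝ)
    (hg : ∀ k, q < k → g k = 0) :
    ∑ t : Fin (M + 3), arEnt g q (M + 3) s t.val * arTn (M + 3) t.val j =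
      arTn (M + 3) s j * lamAR g q (M + 2) j := by
  have hM1 : M + 3 - 1 = M + 2 := by omega
  have hM2 : M + 3 - 2 = M + 1 := by omega
  have hMr : (M : ℝ) + 2 ≠ 0 := by positivity
  have main : ∀ f : ℤ → ℝ, (∀ t : ℕ, t ≤ M + 2 → arTn (M + 3) t j = f t) →
      (∀ x, f (-x) = 2 * f 0 - f x) →
      (∀ x, f (2 * (M + 2) - x) = 2 * f (M + 2) - f x) →
      (∀ x : ℤ, ∀ k : ℕ, f (x + k) + f (x - k) =
        2 * cos (k * (if j = 0 ∨ j = M + 2 then 0 else j * π / (M + 2 : ℕ))) * f x) →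
      ∑ t : Fin (M + 3), arEnt g q (M + 3) s t.val * arTn (M + 3) t.val j =
      arTn (M + 3) s j * lamAR g q (M + 2) j := by
    intro f hf h0 hN hθ
    rw [hf s hs, lamAR, ← arEnt_action M q s hq hs g hg f _ h0 hN hθ]
    exact Finset.sum_congr rfl fun t _ => by rw [hf t.val (by omega)]
  rcases eq_or_ne j 0 with rfl | h1
  · refine main (fun x => (alphaAR (M + 3))⁻¹ * (1 - x / (M + 2))) ?_ ?_ ?_ ?_
    · intro t ht
      simp only [arTn, if_true, hM1, pv]
      split_ifs with h h'
      · simp [h]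
      · subst h'
        push_cast
        field_simp; ring
      · push_cast
        rw [show (M : ℝ) + 3 - 1 = M + 2 by ring]
    · intro x; push_cast; ring
    · intro x; push_cast; field_simp; ring
    · intro x k; simp; ring
  · rcases eq_or_ne j (M + 2) with rfl | h2
    · refine main (fun x => (alphaAR (M + 3))⁻¹ * (x / (M + 2))) ?_ ?_ ?_ ?_
      · intro t ht
        simp only [arTn, hM1, pv, h1, if_false, if_true]
        split_ifs with h h'
        · simp [h]
        · subst h'
          push_cast
          field_simp
        · push_cast [Nat.cast_sub ht]
          rw [show (M : ℝ) + 3 - 1 = M + 2 by ring]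
          field_simp; ring
      · intro x; push_cast; ring
      · intro x; push_cast; field_simp
      · intro x k; simp; ring
    · refine main (fun x => √(2 / ((M : ℝ) + 2)) * sin (x * (j * π / (M + 2)))) ?_ ?_ ?_ ?_
      · intro t ht
        simp only [arTn, hM1, hM2, h1, h2, if_false]
        split_ifs with h
        · rcases h with h | h
          · simp [h]
          · subst h
            have : (((M + 2 : ℕ) : ℤ) : ℝ) * (j * π / (M + 2)) = j * π := by
              push_cast; field_simp
            rw [this, Real.sin_nat_mul_pi, mul_zero]
        · unfold dstIent
          push_cast
          rw [show (M : ℝ) + 1 + 1 = M + 2 by ring]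
          congr 2; ring
      · intro x
        push_cast
        rw [neg_mul, sin_neg]; simp
      · intro x
        have e1 : (((2 * ((M : ℤ) + 2) - x : ℤ)) : ℝ) * (j * π / (M + 2)) =
          j * (2 * π) - x * (j * π / (M + 2)) := by
          push_cast; field_simp
        have e2 : ((((M : ℤ) + 2 : ℤ)) : ℝ) * (j * π / (M + 2)) = j * π := by
          push_cast; field_simp
        rw [e1, e2, Real.sin_nat_mul_pi, Real.sin_nat_mul_two_pi_sub]; ring
      · intro x k
        simp only [h1, h2, or_self, if_false]
        push_cast
        rw [add_mul, sub_mul, sin_add, sin_sub]; ring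

lemma arMat_mul (M q : ℕ) (hq : q ≤ M) (g : ℕ → ℝ) (hg : ∀ k, q < k → g k = 0)
    (s j : Fin (M + 3)) :
    (arMat g q (M + 3) * arT (M + 3)) s j = arT (M + 3) s j * lamAR g q (M + 2) j.val := by
  rw [Matrix.mul_apply]
  exact arEnt_eig M q s.val j.val hq (by omega) (by omega) g hg

lemma arMat2_mul (M1 M2 q1 q2 : ℕ) (hq1 : q1 ≤ M1) (hq2 : q2 ≤ M2) (h : ℕ → ℕ → ℝ)
    (hsupp : ∀ k1 k2, q1 < k1 ∨ q2 < k2 → h k1 k2 = 0) :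
    arMat2 h q1 q2 (M1 + 3) (M2 + 3) * (arT (M1 + 3) ⊗ₖ arT (M2 + 3)) =
      (arT (M1 + 3) ⊗ₖ arT (M2 + 3)) * Matrix.diagonal (fun j =>
        lamAR (fun k => lamAR (h k) q2 (M2 + 2) j.2.val) q1 (M1 + 2) j.1.val) := by
  ext ⟨i1, i2⟩ ⟨j1, j2⟩
  rw [Matrix.mul_diagonal, Matrix.mul_apply, Fintype.sum_prod_type]
  simp only [Matrix.kroneckerMap_apply]
  let φ : Matrix (Fin (M2 + 3)) (Fin (M2 + 3)) ℝ →+ ℝ :=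
    { toFun := fun A => (A * arT (M2 + 3)) i2 j2
      map_zero' := by simp
      map_add' := by intro A B; simp [Matrix.add_mul] }
  have hφ : ∀ k, φ (arMat (h k) q2 (M2 + 3)) =
      arT (M2 + 3) i2 j2 * lamAR (h k) q2 (M2 + 2) j2.val := fun k =>
    arMat_mul M2 q2 hq2 (h k) (fun l hl => hsupp k l (Or.inr hl)) i2 j2
  have step : ∀ t : Fin (M1 + 3), ∑ l : Fin (M2 + 3),
      arMat2 h q1 q2 (M1 + 3) (M2 + 3) (i1, i2) (t, l) * (arT (M1 + 3) t j1 * arT (M2 + 3) l j2) =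
      arEnt (fun k => arT (M2 + 3) i2 j2 * lamAR (h k) q2 (M2 + 2) j2.val) q1 (M1 + 3)
        i1.val t.val * arTn (M1 + 3) t.val j1.val := by
    intro t
    simp_rw [← hφ]
    rw [← arEnt_map φ (fun k => arMat (h k) q2 (M2 + 3))]
    change _ = ((_ : Matrix (Fin (M2 + 3)) (Fin (M2 + 3)) ℝ) * arT (M2 + 3)) i2 j2
      * arT (M1 + 3) t j1
    rw [Matrix.mul_apply, Finset.sum_mul]
    refine Finset.sum_congr rfl fun l _ => ?_
    unfold arMat2
    ring
  rw [Finset.sum_congr rfl (fun t _ => step t)]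
  rw [arEnt_eig M1 q1 i1.val j1.val hq1 (by omega) (by omega)]
  · change arT (M1 + 3) i1 j1 * _ = _
    rw [mul_assoc]
    congr 1
    simp only [lamAR, mul_add, Finset.mul_sum, mul_assoc, Finset.sum_mul, add_mul]
  · intro k hk
    have : lamAR (h k) q2 (M2 + 2) j2.val = 0 := by
      have hz : ∀ l, h k l = 0 := fun l => hsupp k l (Or.inl hk)
      simp [lamAR, hz]
    rw [this, mul_zero]

/-- Diagonalization of the two-level anti-reflective matrix: `A_n` is diagonalized by
`T_n = T_{n1}⊗T_{n2}`, i.e. `(T̃_{n1}⊗T̃_{n2}) A_n (T_{n1}⊗T_{n2})` is diagonal,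
where `T̃_{n1}⊗T̃_{n2} = (T_{n1}⊗T_{n2})⁻¹`. -/
theorem arMat2_diagonalization (n1 n2 q1 q2 : ℕ) (hn1 : 3 ≤ n1) (hn2 : 3 ≤ n2)
    (hq1 : q1 ≤ n1 - 3) (hq2 : q2 ≤ n2 - 3) (h : ℕ → ℕ → ℝ)
    (hsupp : ∀ k1 k2, q1 < k1 ∨ q2 < k2 → h k1 k2 = 0) :
    (arT n1 ⊗ₖ arT n2) * (arTtil n1 ⊗ₖ arTtil n2) = 1 ∧
    (arTtil n1 ⊗ₖ arTtil n2) * (arT n1 ⊗ₖ arT n2) = 1 ∧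
    ∃ d : Fin n1 × Fin n2 → ℝ,
      (arTtil n1 ⊗ₖ arTtil n2) * arMat2 h q1 q2 n1 n2 * (arT n1 ⊗ₖ arT n2) =
        Matrix.diagonal d := by
  obtain ⟨M1, rfl⟩ : ∃ M, n1 = M + 3 := ⟨n1 - 3, by omega⟩
  obtain ⟨M2, rfl⟩ : ∃ M, n2 = M + 3 := ⟨n2 - 3, by omega⟩
  have key : (arTtil (M1+3) ⊗ₖ arTtil (M2+3)) * (arT (M1+3) ⊗ₖ arT (M2+3)) = 1 := by
    rw [← Matrix.mul_kronecker_mul, arTtil_mul_arT, arTtil_mul_arT, Matrix.one_kronecker_one]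
  refine ⟨mul_eq_one_comm.mp key, key, fun j => lamAR (fun k => lamAR (h k) q2 (M2+2) j.2.val)
    q1 (M1+2) j.1.val, ?_⟩
  rw [Matrix.mul_assoc, arMat2_mul M1 M2 q1 q2 (by omega) (by omega) h hsupp, ← Matrix.mul_assoc,
    key, Matrix.one_mul]
end

section
/- (Eigenvalues of the anti-reflective matrix.) Let n1, n2 ≥ 3 and let h = (h_{i1,i2}) be a strongly symmetric two-dimensional PSF mask with q1 ≤ n1−3, q2 ≤ n2−3, normalized so that ∑_{i1=−q1}^{q1}∑_{i2=−q2}^{q2} h_{i1,i2} = 1. Let A_n be the two-level anti-reflective matrix associated with h. Then the characteristic polynomial of A_n factors as char(A_n)(λ) = (λ−1)⁴ · [char(τ_{n2−2}(h^{r}))(λ)]² · [char(τ_{n1−2}(h^{c}))(λ)]² · char(τ_{n1−2,n2−2}(h))(λ), i.e. the eigenvalues of A_n are: 1 with algebraic multiplicity 4; each eigenvalue of the unilevel τ matrix τ_{n2−2}(h^{r}) with multiplicity 2, where h^{r}_k = ∑_{i1=−q1}^{q1} h_{i1,k}; each eigenvalue of the unilevel τ matrix τ_{n1−2}(h^{c})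 with multiplicity 2, where h^{c}_k = ∑_{i2=−q2}^{q2} h_{k,i2}; and the eigenvalues of the two-level τ matrix τ_{n1−2,n2−2}(h). -/
open Real Matrix Polynomial

/-- The one-level `τ` sum `g_{|i−j|} − g_{i+j} − g_{2(m+1)−i−j}` with 1-based indices
`i = i0 + 1`, `j = j0 + 1` (generic, so that it can also be applied at block level). -/
def tauEnt {R : Type*} [SubtractionMonoid R] (g : ℕ → R) (m i0 j0 : ℕ) : R :=
  g ((i0 : ℤ) - (j0 : ℤ)).natAbs - g (i0 + j0 + 2) - g (2 * m - i0 - j0)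

/-- The unilevel `τ` matrix `τ_m(g)` with entries
`g_{|s−t|} − g_{s+t} − g_{2(m+1)−s−t}` (1-based `s,t = 1,…,m`). -/
noncomputable def tauMat (g : ℕ → ℝ) (m : ℕ) : Matrix (Fin m) (Fin m) ℝ := fun s t =>
  tauEnt g m s.val t.val

/-- The two-level `τ` matrix `τ_{m1,m2}(h)` with entries
`∑_{(k1,ε1)}∑_{(k2,ε2)} ε1 ε2 h_{k1,k2}`, `(k1,ε1)` ranging over
`{(|i1−j1|,+1),(i1+j1,−1),(2(m1+1)−i1−j1,−1)}` and similarly `(k2,ε2)`. -/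
noncomputable def tau2Mat (h : ℕ → ℕ → ℝ) (m1 m2 : ℕ) :
    Matrix (Fin m1 × Fin m2) (Fin m1 × Fin m2) ℝ := fun i j =>
  tauEnt (fun k1 => tauEnt (h k1) m2 i.2.val j.2.val) m1 i.1.val j.1.val

/-- Splitting off the two outer (block) rows. -/
def arEquiv (m : ℕ) (ι : Type*) : Fin (m + 2) × ι ≃ (ι ⊕ ι) ⊕ (Fin m × ι) where
  toFun p := Fin.cases (motive := fun _ => (ι ⊕ ι) ⊕ (Fin m × ι)) (Sum.inl (Sum.inl p.2))
    (fun k => Fin.lastCases (motive := fun _ => (ι ⊕ ι) ⊕ (Fin m × ι)) (Sum.inl (Sum.inr p.2))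
      (fun l => Sum.inr (l, p.2)) k) p.1
  invFun
    | Sum.inl (Sum.inl x) => (0, x)
    | Sum.inl (Sum.inr x) => (Fin.last (m + 1), x)
    | Sum.inr (l, x) => (l.castSucc.succ, x)
  left_inv := by
    rintro ⟨i, x⟩
    induction i using Fin.cases with
    | zero => simp
    | succ k =>
      induction k using Fin.lastCases with
      | last => 
        simp only [Fin.cases_succ, Fin.lastCases_last]
        rfl
      | cast l => simp
  right_inv := by
    rintro ((x | x) | ⟨l, x⟩)
    · simp
    · have : Fin.last (m + 1) = (Fin.last m).succ := rfl
      simp only [this, Fin.cases_succ, Fin.lastCases_last]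
    · simp

theorem charpoly_split {m : ℕ} {ι : Type*} [Fintype ι] [DecidableEq ι]
    (M : Matrix (Fin (m + 2) × ι) (Fin (m + 2) × ι) ℝ)
    (h0 : ∀ x j y, j ≠ 0 → M (0, x) (j, y) = 0)
    (h1 : ∀ x j y, j ≠ Fin.last (m + 1) → M (Fin.last (m + 1), x) (j, y) = 0) :
    M.charpoly = (Matrix.of fun x y => M (0, x) (0, y)).charpoly *
      (Matrix.of fun x y => M (Fin.last (m + 1), x) (Fin.last (m + 1), y)).charpoly *
      (Matrix.of fun a b : Fin m × ι =>
        M (a.1.castSucc.succ, a.2) (b.1.castSucc.succ, b.2)).charpoly := by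
  have hM : (Matrix.reindex (arEquiv m ι) (arEquiv m ι) M) =
      Matrix.fromBlocks
        (Matrix.fromBlocks (Matrix.of fun x y => M (0, x) (0, y)) 0 0
          (Matrix.of fun x y => M (Fin.last (m + 1), x) (Fin.last (m + 1), y)))
        0
        (Matrix.of fun a b => M ((arEquiv m ι).symm (Sum.inr a)) ((arEquiv m ι).symm (Sum.inl b)))
        (Matrix.of fun a b : Fin m × ι =>
          M (a.1.castSucc.succ, a.2) (b.1.castSucc.succ, b.2)) := by
    ext a b
    rcases a with (a | a) | ⟨k, a⟩ <;> rcases b with (b | b) | ⟨l, b⟩ <;>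
      simp [arEquiv]
    · exact h0 _ _ _ (by simp [Fin.ext_iff])
    · exact h0 _ _ _ (by simp [Fin.ext_iff])
    · exact h1 _ _ _ (by simp [Fin.ext_iff])
    · exact h1 _ _ _ (by simp [Fin.ext_iff]; omega)
  rw [← Matrix.charpoly_reindex (arEquiv m ι) M, hM, Matrix.charpoly_fromBlocks_zero₁₂,
    Matrix.charpoly_fromBlocks_zero₁₂]

theorem sum_sym (q : ℕ) (f : ℕ → ℝ) :
    ∑ i ∈ Finset.Icc (-(q : ℤ)) (q : ℤ), f i.natAbs = f 0 + 2 * ∑ t ∈ Finset.Icc 1 q, f t := by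
  induction q with
  | zero => simp
  | succ n ih =>
    have : Finset.Icc (-((n + 1 : ℕ) : ℤ)) ((n + 1 : ℕ) : ℤ) =
        insert (-((n : ℤ) + 1)) (insert ((n : ℤ) + 1) (Finset.Icc (-(n : ℤ)) (n : ℤ))) := by
      ext x
      simp only [Finset.mem_Icc, Finset.mem_insert]
      push_cast
      omega
    rw [this, Finset.sum_insert, Finset.sum_insert, ih, Finset.sum_Icc_succ_top (by omega)]
    · have e1 : (-((n : ℤ) + 1)).natAbs = n + 1 := by omega
      have e2 : ((n : ℤ) + 1).natAbs = n + 1 := by omega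
      rw [e1, e2]
      ring
    · simp
    · simp only [Finset.mem_Icc, Finset.mem_insert]
      omega

section arEntLemmas
variable {R : Type*} [Ring R]

theorem arEnt_zero_zero (g : ℕ → R) (q m : ℕ) :
    arEnt g q m 0 0 = g 0 + 2 * ∑ t ∈ Finset.Icc 1 q, g t := by
  simp [arEnt, arColR]

theorem arEnt_last_last (g : ℕ → R) (q m : ℕ) :
    arEnt g q (m + 2) (m + 1) (m + 1) = g 0 + 2 * ∑ t ∈ Finset.Icc 1 q, g t := by
  have : m + 2 - (m + 1) = 1 := by omega
  simp [arEnt, arColR, this]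

theorem arEnt_zero_ne (g : ℕ → R) (q m j : ℕ) (hq : q < m) (hj : j ≠ 0) :
    arEnt g q (m + 2) 0 j = 0 := by
  have : ¬ (m + 2 ≤ q + 1) := by omega
  simp [arEnt, arColR, hj, this]

theorem arEnt_last_ne (g : ℕ → R) (q m j : ℕ) (hq : q < m) (hj : j ≠ m + 1) :
    arEnt g q (m + 2) (m + 1) j = 0 := by
  have : ¬ (m + 1 + 1 ≤ q + 1) := by omega
  simp [arEnt, arColR, hj]
  intro _ h
  omega

theorem arEnt_mid (g : ℕ → R) (q m s t : ℕ) (hs : s < m) (ht : t < m) :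
    arEnt g q (m + 2) (s + 1) (t + 1) = tauEnt g m s t := by
  have h1 : t ≠ m := by omega
  have h2 : s ≠ m := by omega
  have e1 : s + 1 + (t + 1) = s + t + 2 := by ring
  have e2 : 2 * (m + 1) - (s + 1) - (t + 1) = 2 * m - s - t := by omega
  simp [arEnt, tauEnt, h1, h2, e1, e2]

end arEntLemmas

theorem arEnt_lin (h : ℕ → ℕ → ℝ) (S : Finset ℕ) (q m s t : ℕ) :
    arEnt (h 0) q m s t + 2 * ∑ k ∈ S, arEnt (h k) q m s t =
      arEnt (fun k => h 0 k + 2 * ∑ i ∈ S, h i k) q m s t := by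
  have key : ∀ a, arColR (h 0) q a + 2 * ∑ k ∈ S, arColR (h k) q a =
      arColR (fun k => h 0 k + 2 * ∑ i ∈ S, h i k) q a := by
    intro a
    unfold arColR
    split_ifs
    · simp only [Finset.sum_add_distrib, ← Finset.mul_sum]
      rw [Finset.sum_comm]
      ring
    · simp
  unfold arEnt
  split_ifs
  · exact key _
  · exact key _
  · simp
  · simp only [Finset.sum_sub_distrib]
    ring

theorem arMat_charpoly (g : ℕ → ℝ) (q m : ℕ) (hq : q < m) :
    (arMat g q (m + 2)).charpoly =
      (X - C (g 0 + 2 * ∑ t ∈ Finset.Icc 1 q, g t)) ^ 2 * (tauMat g m).charpoly := by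
  rw [← Matrix.charpoly_reindex (Equiv.prodPUnit.{0} (Fin (m + 2))).symm, charpoly_split]
  · rw [← Matrix.charpoly_reindex (Equiv.prodPUnit.{0} (Fin m)).symm (tauMat g m), sq]
    congr 1
    · congr 1
      · simp [Matrix.charpoly, Matrix.det_unique, arMat, arEnt_zero_zero]
      · simp [Matrix.charpoly, Matrix.det_unique, arMat, arEnt_last_last]
    · congr 1
      ext a b
      simp [arMat, tauMat, arEnt_mid]
  · intro x j y hj
    exact arEnt_zero_ne _ _ _ _ hq (fun hh => hj (Fin.ext hh))
  · intro x j y hj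
    exact arEnt_last_ne _ _ _ _ hq (fun hh => hj (Fin.ext hh))

theorem corner_eq (h : ℕ → ℕ → ℝ) (q1 q2 n : ℕ) :
    (arMat (h 0) q2 n + 2 * ∑ t ∈ Finset.Icc 1 q1, arMat (h t) q2 n) =
      arMat (fun k => h 0 k + 2 * ∑ i ∈ Finset.Icc 1 q1, h i k) q2 n := by
  ext i j
  have e : (2 * ∑ t ∈ Finset.Icc 1 q1, arMat (h t) q2 n) =
    (2 : ℝ) • ∑ t ∈ Finset.Icc 1 q1, arMat (h t) q2 n := by
    rw [two_mul, two_smul]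
  rw [e]
  simp only [Matrix.add_apply, Matrix.smul_apply, Matrix.sum_apply, smul_eq_mul]
  exact arEnt_lin h _ _ _ _ _

theorem central_charpoly (h : ℕ → ℕ → ℝ) (m1 m2 q2 : ℕ) (hq : q2 < m2) :
    (Matrix.of fun a b : Fin m1 × Fin (m2 + 2) =>
      tauEnt (fun k => arEnt (h k) q2 (m2 + 2) a.2.val b.2.val) m1 a.1.val b.1.val).charpoly =
    (tauMat (fun k => h k 0 + 2 * ∑ i ∈ Finset.Icc 1 q2, h k i) m1).charpoly ^ 2 *
      (tau2Mat h m1 m2).charpoly := by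
  rw [← Matrix.charpoly_reindex (Equiv.prodComm (Fin m1) (Fin (m2 + 2))), charpoly_split]
  · rw [← Matrix.charpoly_reindex (Equiv.prodComm (Fin m1) (Fin m2)) (tau2Mat h m1 m2), sq]
    refine congrArg₂ _ (congrArg₂ _ (congrArg _ ?_) (congrArg _ ?_)) (congrArg _ ?_)
    · ext a b
      simp [arEnt_zero_zero, tauMat]
    · ext a b
      simp [arEnt_last_last, tauMat]
    · ext a b
      simp [arEnt_mid, tau2Mat]
  · intro x j y hj
    have hj' : j.val ≠ 0 := fun hh => hj (Fin.ext hh)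
    simp [tauEnt, arEnt_zero_ne _ _ _ _ hq hj']
  · intro x j y hj
    have hj' : j.val ≠ m2 + 1 := fun hh => hj (Fin.ext hh)
    simp [tauEnt, arEnt_last_ne _ _ _ _ hq hj']

/-- Eigenvalues of the two-level anti-reflective matrix: its characteristic
polynomial factors as
`char(A_n)(λ) = (λ−1)⁴ · char(τ_{n2−2}(h^r))² · char(τ_{n1−2}(h^c))² · char(τ_{n1−2,n2−2}(h))`,
where `h^r_k = ∑_{i1=−q1}^{q1} h_{i1,k}` and `h^c_k = ∑_{i2=−q2}^{q2} h_{k,i2}`. -/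
theorem arMat2_charpoly (n1 n2 q1 q2 : ℕ) (hn1 : 3 ≤ n1) (hn2 : 3 ≤ n2)
    (hq1 : q1 ≤ n1 - 3) (hq2 : q2 ≤ n2 - 3) (h : ℕ → ℕ → ℝ)
    (hsupp : ∀ k1 k2, q1 < k1 ∨ q2 < k2 → h k1 k2 = 0)
    (hnorm : ∑ i1 ∈ Finset.Icc (-(q1 : ℤ)) (q1 : ℤ),
        ∑ i2 ∈ Finset.Icc (-(q2 : ℤ)) (q2 : ℤ), h i1.natAbs i2.natAbs = 1) :
    (arMat2 h q1 q2 n1 n2).charpoly =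
      (X - 1) ^ 4 *
        (tauMat (fun k => ∑ i1 ∈ Finset.Icc (-(q1 : ℤ)) (q1 : ℤ), h i1.natAbs k)
            (n2 - 2)).charpoly ^ 2 *
        (tauMat (fun k => ∑ i2 ∈ Finset.Icc (-(q2 : ℤ)) (q2 : ℤ), h k i2.natAbs)
            (n1 - 2)).charpoly ^ 2 *
        (tau2Mat h (n1 - 2) (n2 - 2)).charpoly := by
  obtain ⟨m1, rfl⟩ : ∃ m, n1 = m + 2 := ⟨n1 - 2, by omega⟩
  obtain ⟨m2, rfl⟩ : ∃ m, n2 = m + 2 := ⟨n2 - 2, by omega⟩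
  have hq1' : q1 < m1 := by omega
  have hq2' : q2 < m2 := by omega
  have er : ∀ k, ∑ i1 ∈ Finset.Icc (-(q1 : ℤ)) (q1 : ℤ), h i1.natAbs k =
      h 0 k + 2 * ∑ i ∈ Finset.Icc 1 q1, h i k := fun k => sum_sym q1 (fun i => h i k)
  have ec : ∀ k, ∑ i2 ∈ Finset.Icc (-(q2 : ℤ)) (q2 : ℤ), h k i2.natAbs =
      h k 0 + 2 * ∑ i ∈ Finset.Icc 1 q2, h k i := fun k => sum_sym q2 (h k)
  have hn : (h 0 0 + 2 * ∑ i ∈ Finset.Icc 1 q1, h i 0) +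
      2 * ∑ t ∈ Finset.Icc 1 q2, (h 0 t + 2 * ∑ i ∈ Finset.Icc 1 q1, h i t) = 1 := by
    rw [Finset.sum_comm] at hnorm
    simp only [er] at hnorm
    rw [← hnorm, sum_sym q2 (fun k => h 0 k + 2 * ∑ i ∈ Finset.Icc 1 q1, h i k)]
  simp only [er, ec]
  change _ = (X - 1) ^ 4 *
    (tauMat (fun k => h 0 k + 2 * ∑ i ∈ Finset.Icc 1 q1, h i k) m2).charpoly ^ 2 *
    (tauMat (fun k => h k 0 + 2 * ∑ i ∈ Finset.Icc 1 q2, h k i) m1).charpoly ^ 2 *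
    (tau2Mat h m1 m2).charpoly
  have hcorner := arMat_charpoly (fun k => h 0 k + 2 * ∑ i ∈ Finset.Icc 1 q1, h i k) q2 m2 hq2'
  rw [hn, C_1] at hcorner
  rw [charpoly_split]
  · have e0 : (Matrix.of fun x y => arMat2 h q1 q2 (m1 + 2) (m2 + 2) (0, x) (0, y)) =
        arMat (fun k => h 0 k + 2 * ∑ i ∈ Finset.Icc 1 q1, h i k) q2 (m2 + 2) := by
      rw [← corner_eq]
      ext x y
      simp only [Matrix.of_apply, arMat2, Fin.val_zero, arEnt_zero_zero]
    have e1 : (Matrix.of fun x y => arMat2 h q1 q2 (m1 + 2) (m2 + 2)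
          (Fin.last (m1 + 1), x) (Fin.last (m1 + 1), y)) =
        arMat (fun k => h 0 k + 2 * ∑ i ∈ Finset.Icc 1 q1, h i k) q2 (m2 + 2) := by
      rw [← corner_eq]
      ext x y
      simp only [Matrix.of_apply, arMat2, Fin.val_last, arEnt_last_last]
    have e2 : (Matrix.of fun a b : Fin m1 × Fin (m2 + 2) =>
          arMat2 h q1 q2 (m1 + 2) (m2 + 2)
            (a.1.castSucc.succ, a.2) (b.1.castSucc.succ, b.2)) =
        (Matrix.of fun a b : Fin m1 × Fin (m2 + 2) =>
          tauEnt (fun k => arEnt (h k) q2 (m2 + 2) a.2.val b.2.val) m1 a.1.val b.1.val) := by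
      ext a b
      simp only [Matrix.of_apply, arMat2, Fin.val_succ, Fin.val_castSucc,
        arEnt_mid _ _ _ _ _ a.1.isLt b.1.isLt]
      rfl
    rw [e0, e1, e2, hcorner, central_charpoly h m1 m2 q2 hq2']
    ring
  · intro x j y hj
    have hj' : j.val ≠ 0 := fun hh => hj (Fin.ext hh)
    simp [arMat2, arEnt_zero_ne _ _ _ _ hq1' hj']
  · intro x j y hj
    have hj' : j.val ≠ m1 + 1 := fun hh => hj (Fin.ext hh)
    simp [arMat2, arEnt_last_ne _ _ _ _ hq1' hj']
end
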